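/- arXiv:2202.05224 — 3 statements merged into one kernel-verified Lean document; each statement's English description precedes it below -/
import Mathlib

section
/- Let d ≥ 2 and κ ≥ 1, and for λ ∈ ℕ define the rescaled kernel K_{κ/λ,1}(s,y) = ∫_{ℝ^d} e^{i(s|ξ| + y·ξ)} ζ̃_{κ,λ}(λξ) dξ. There exists a constant C > 0 such that sup_{y∈ℝ^d} |K_{κ/λ,1}(s,y)| ≤ C ( λ^{−1} s^{−(d−1)/2} + λ^{−1} (s/λ)^{−(d−1)} ) for all s > 0 and all λ ∈ ℕ with λ ≥ κ + 1. -/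
open MeasureTheory Complex
open scoped RealInnerProductSpace ENNReal

/-!
In polar coordinates the kernel is the integral of `r ^ (d - 1) * e ^ {i r (s + ⟪y, ω⟫)} ζ(λ (r - 1))`
over `ω` in the unit sphere and `r > 0`; the cutoff confines `r` to an interval of length `2 κ / λ`
inside `[1 / (1 + κ), 2]`. There are two regimes.

* If `‖y‖ ≥ s / 2`, integrate in `ω` first. The Fourier transform of the surface measure is
  `O(‖η‖ ^ (-(d - 1) / 2))` (`sphere_decay`), here with `‖η‖ = r ‖y‖ ≳ s`, and the `r`-integration
  contributes the factor `1 / λ`. This is the first term of the bound.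
* If `‖y‖ ≤ s / 2`, integrate in `r` first. The radial frequency `A = s + ⟪y, ω⟫` is at least `s / 2`.
  With `r = 1 + u / λ` the radial integral is `1 / λ` times a combination, with coefficients bounded
  uniformly in `λ`, of the Fourier transforms of the test functions `u ^ j ζ(u)` at frequency `A / λ`;
  these decay faster than `(A / λ) ^ (-(d - 1))` (`radial_decay`). This is the second term.

The decay of the Fourier transform of the sphere is obtained without stationary phase. Rotation
invariance shows that `u(r) = ∫ cos (r ⟪e, ω⟫) dω` solves the Bessel-type equation
`r (u + u'') = -(d - 1) u'` (`bessel_ode`), and a modified energy of this equation is almost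
conserved, which gives `r ^ (d - 1) u(r) ^ 2 = O(1)` (`energy_bound`).
-/

namespace HalfWave
open Metric Set
open scoped Pointwise

variable {d : ℕ}

/-- The surface measure on the unit sphere of `ℝ^d`. -/
noncomputable abbrev sph (d : ℕ) : Measure (sphere (0 : EuclideanSpace ℝ (Fin d)) 1) :=
  (volume : Measure (EuclideanSpace ℝ (Fin d))).toSphere

/-! ### The Fourier transform of the unit sphere -/

/-- The surface measure is invariant under linear isometries. -/
theorem integral_sph_comp (T : EuclideanSpace ℝ (Fin d) ≃ₗᵢ[ℝ] EuclideanSpace ℝ (Fin d))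
    (f : EuclideanSpace ℝ (Fin d) → ℝ) :
    ∫ ω, f (T (ω : EuclideanSpace ℝ (Fin d))) ∂(sph d) = ∫ ω, f (ω : EuclideanSpace ℝ (Fin d)) ∂(sph d) := by
  let τ : sphere (0 : EuclideanSpace ℝ (Fin d)) 1 ≃ₜ sphere (0 : EuclideanSpace ℝ (Fin d)) 1 :=
    T.toHomeomorph.subtype (by intro x; simp)
  have hτ : MeasurePreserving τ (sph d) (sph d) := by
    refine ⟨τ.continuous.measurable, ?_⟩
    ext s hs
    rw [Measure.map_apply τ.continuous.measurable hs, Measure.toSphere_apply' _ hs,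
      Measure.toSphere_apply' _ (τ.continuous.measurable hs)]
    congr 1
    have hT : MeasurePreserving T.toMeasurableEquiv volume volume := T.measurePreserving
    rw [← hT.measure_preimage_equiv (Ioo (0 : ℝ) 1 • (Subtype.val '' s))]
    congr 1
    ext x
    simp only [Set.mem_smul, Set.mem_image, Set.mem_preimage]
    constructor
    · rintro ⟨r, hr, y, ⟨z, hz, rfl⟩, rfl⟩
      exact ⟨r, hr, τ z, ⟨τ z, hz, rfl⟩, (map_smul T r _).symm⟩
    · rintro ⟨r, hr, y, ⟨z, hz, rfl⟩, hx⟩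
      refine ⟨r, hr, τ.symm z, ⟨τ.symm z, by simpa using hz, rfl⟩, ?_⟩
      apply T.injective
      have : T (τ.symm z : EuclideanSpace ℝ (Fin d)) = z :=
        congrArg Subtype.val (τ.apply_symm_apply z)
      rw [map_smul, this]
      exact hx
  exact hτ.integral_comp τ.measurableEmbedding (fun ω => f ω)

/-- The Fourier transform of the surface measure is radial: the reflection exchanging `y` and `z`
preserves the measure. -/
theorem integral_cos_eq (y z : EuclideanSpace ℝ (Fin d)) (h : ‖y‖ = ‖z‖) :
    ∫ ω, Real.cos ⟪y, (ω : EuclideanSpace ℝ (Fin d))⟫ ∂(sph d) =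
      ∫ ω, Real.cos ⟪z, (ω : EuclideanSpace ℝ (Fin d))⟫ ∂(sph d) := by
  rw [← integral_sph_comp (Submodule.reflection (ℝ ∙ (y - z))ᗮ) (fun ω => Real.cos ⟪z, ω⟫)]
  congr 1
  ext ω
  have h2 := LinearIsometryEquiv.inner_map_map (Submodule.reflection (ℝ ∙ (y - z))ᗮ) y
    (ω : EuclideanSpace ℝ (Fin d))
  rw [Submodule.reflection_sub h] at h2
  rw [h2]

theorem integral_sin_eq_zero (y : EuclideanSpace ℝ (Fin d)) :
    ∫ ω, Real.sin ⟪y, (ω : EuclideanSpace ℝ (Fin d))⟫ ∂(sph d) = 0 := by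
  have := integral_sph_comp (LinearIsometryEquiv.neg ℝ) (fun ω : EuclideanSpace ℝ (Fin d) => Real.sin ⟪y, ω⟫)
  simp [integral_neg] at this
  linarith

theorem hasDerivAt_integral_sph {F F' : ℝ → sphere (0 : EuclideanSpace ℝ (Fin d)) 1 → ℝ} (C : ℝ)
    (t : ℝ)
    (hF : ∀ t, Continuous (F t)) (hF' : ∀ t, Continuous (F' t))
    (hd : ∀ t ω, HasDerivAt (fun t => F t ω) (F' t ω) t) (hC : ∀ t ω, |F' t ω| ≤ C) :
    HasDerivAt (fun t => ∫ ω, F t ω ∂(sph d)) (∫ ω, F' t ω ∂(sph d)) t := by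
  have hi : ∀ g : sphere (0 : EuclideanSpace ℝ (Fin d)) 1 → ℝ, Continuous g → Integrable g (sph d) :=
    fun g hg => hg.integrable_of_hasCompactSupport (HasCompactSupport.of_compactSpace _)
  refine (hasDerivAt_integral_of_dominated_loc_of_deriv_le (s := Set.univ) (bound := fun _ => C)
    Filter.univ_mem (.of_forall fun t => (hF t).aestronglyMeasurable) (hi _ (hF t))
    (hF' t).aestronglyMeasurable (.of_forall fun ω t _ => hC t ω) (hi _ continuous_const)
    (.of_forall fun ω t _ => hd t ω)).2

theorem abs_inner_sphere_le (e : EuclideanSpace ℝ (Fin d)) (he : ‖e‖ = 1)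
    (ω : sphere (0 : EuclideanSpace ℝ (Fin d)) 1) :
    |⟪e, (ω : EuclideanSpace ℝ (Fin d))⟫| ≤ 1 := by
  have := abs_real_inner_le_norm e (ω : EuclideanSpace ℝ (Fin d))
  simpa [he] using this

/-- For orthonormal `e`, `f` the function `θ ↦ ∫ cos ⟪r (cos θ e + sin θ f), ω⟫ dω` is constant;
this identity says that its second derivative at `θ = 0` vanishes. -/
theorem rotation_identity (e f : EuclideanSpace ℝ (Fin d)) (he : ‖e‖ = 1) (hf : ‖f‖ = 1)
    (hef : ⟪e, f⟫ = 0) (r : ℝ) (hr : 0 < r) :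
    r * ∫ ω, ⟪f, (ω : EuclideanSpace ℝ (Fin d))⟫ ^ 2 *
        Real.cos (r * ⟪e, (ω : EuclideanSpace ℝ (Fin d))⟫) ∂(sph d) =
      ∫ ω, ⟪e, (ω : EuclideanSpace ℝ (Fin d))⟫ *
        Real.sin (r * ⟪e, (ω : EuclideanSpace ℝ (Fin d))⟫) ∂(sph d) := by
  set a : sphere (0 : EuclideanSpace ℝ (Fin d)) 1 → ℝ := fun ω => ⟪e, (ω : EuclideanSpace ℝ (Fin d))⟫
    with ha
  set b : sphere (0 : EuclideanSpace ℝ (Fin d)) 1 → ℝ := fun ω => ⟪f, (ω : EuclideanSpace ℝ (Fin d))⟫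
    with hb
  have hac : Continuous a := by fun_prop
  have hbc : Continuous b := by fun_prop
  have ha1 : ∀ ω, |a ω| ≤ 1 := abs_inner_sphere_le e he
  have hb1 : ∀ ω, |b ω| ≤ 1 := abs_inner_sphere_le f hf
  -- `X θ` is the phase at angle `θ` and `Y θ` its `θ`-derivative
  let X : ℝ → sphere (0 : EuclideanSpace ℝ (Fin d)) 1 → ℝ := fun θ ω =>
    r * (Real.cos θ * a ω + Real.sin θ * b ω)
  let Y : ℝ → sphere (0 : EuclideanSpace ℝ (Fin d)) 1 → ℝ := fun θ ω =>
    r * (-Real.sin θ * a ω + Real.cos θ * b ω)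
  have hX : ∀ θ ω, HasDerivAt (fun θ => X θ ω) (Y θ ω) θ := fun θ ω =>
    (((Real.hasDerivAt_cos θ).mul_const _).add ((Real.hasDerivAt_sin θ).mul_const _)).const_mul r
  have hY : ∀ θ ω, HasDerivAt (fun θ => Y θ ω) (-X θ ω) θ := fun θ ω => by
    refine ((((Real.hasDerivAt_sin θ).neg.mul_const _).add
      ((Real.hasDerivAt_cos θ).mul_const _)).const_mul r).congr_deriv ?_
    simp only [X]; ring
  have hXc : ∀ θ, Continuous (X θ) := fun θ => by fun_prop
  have hYc : ∀ θ, Continuous (Y θ) := fun θ => by fun_prop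
  have hXY : ∀ p q : ℝ, |p| ≤ 1 → |q| ≤ 1 → ∀ ω, |r * (p * a ω + q * b ω)| ≤ 2 * r := by
    intro p q hp hq ω
    rw [abs_mul, abs_of_pos hr]
    have h1 := abs_add_le (p * a ω) (q * b ω)
    rw [abs_mul, abs_mul] at h1
    have h2 := mul_le_one₀ hp (abs_nonneg _) (ha1 ω)
    have h3 := mul_le_one₀ hq (abs_nonneg _) (hb1 ω)
    nlinarith
  have hXb : ∀ θ ω, |X θ ω| ≤ 2 * r := fun θ ω =>
    hXY _ _ (Real.abs_cos_le_one θ) (Real.abs_sin_le_one θ) ω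
  have hYb : ∀ θ ω, |Y θ ω| ≤ 2 * r := fun θ ω =>
    hXY _ _ (by rw [abs_neg]; exact Real.abs_sin_le_one θ) (Real.abs_cos_le_one θ) ω
  have hconst : ∀ θ, ∫ ω, Real.cos (X θ ω) ∂(sph d) = ∫ ω, Real.cos (X 0 ω) ∂(sph d) := by
    intro θ
    have key : ∀ θ ω, X θ ω =
        ⟪r • (Real.cos θ • e + Real.sin θ • f), (ω : EuclideanSpace ℝ (Fin d))⟫ := by
      intro θ ω
      simp [X, a, b, inner_add_left, inner_smul_left, mul_add]
    have hn : ∀ θ : ℝ, ‖r • (Real.cos θ • e + Real.sin θ • f)‖ = r := by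
      intro θ
      have : ‖Real.cos θ • e + Real.sin θ • f‖ = 1 := by
        have h2 : ‖Real.cos θ • e + Real.sin θ • f‖ ^ 2 = 1 := by
          rw [norm_add_sq_real]
          simp [norm_smul, he, hf, inner_smul_left, inner_smul_right, hef]
        exact (pow_eq_one_iff_of_nonneg (norm_nonneg _) two_ne_zero).mp h2
      rw [norm_smul, this, Real.norm_of_nonneg hr.le, mul_one]
    simp only [key]
    exact integral_cos_eq _ _ (by rw [hn, hn])
  have h1 : ∀ θ, ∫ ω, -Real.sin (X θ ω) * Y θ ω ∂(sph d) = 0 := by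
    intro θ
    have h := hasDerivAt_integral_sph (d := d) (F := fun θ ω => Real.cos (X θ ω))
      (F' := fun θ ω => -Real.sin (X θ ω) * Y θ ω) (2 * r) θ
      (fun θ => Real.continuous_cos.comp (hXc θ))
      (fun θ => (Real.continuous_sin.comp (hXc θ)).neg.mul (hYc θ))
      (fun θ ω => (hX θ ω).cos) (fun θ ω => by
        rw [abs_mul, abs_neg]
        exact (mul_le_of_le_one_left (abs_nonneg _) (Real.abs_sin_le_one _)).trans (hYb θ ω))
    rw [funext hconst] at h
    exact h.unique (hasDerivAt_const _ _)
  have h2 := hasDerivAt_integral_sph (d := d) (F := fun θ ω => -Real.sin (X θ ω) * Y θ ω)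
      (F' := fun θ ω => -(Real.cos (X θ ω) * Y θ ω) * Y θ ω + -Real.sin (X θ ω) * (-X θ ω))
      ((2 * r) * (2 * r) + 2 * r) 0
      (fun θ => (Real.continuous_sin.comp (hXc θ)).neg.mul (hYc θ))
      (fun θ => (((Real.continuous_cos.comp (hXc θ)).mul (hYc θ)).neg.mul (hYc θ)).add
        ((Real.continuous_sin.comp (hXc θ)).neg.mul (hXc θ).neg))
      (fun θ ω => (hX θ ω).sin.neg.mul (hY θ ω)) (fun θ ω => by
        refine (abs_add_le _ _).trans (add_le_add ?_ ?_)
        · rw [abs_mul, abs_neg, abs_mul]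
          exact mul_le_mul ((mul_le_of_le_one_left (abs_nonneg _) (Real.abs_cos_le_one _)).trans
            (hYb θ ω)) (hYb θ ω) (abs_nonneg _) (by positivity)
        · rw [abs_mul, abs_neg, abs_neg]
          exact (mul_le_of_le_one_left (abs_nonneg _) (Real.abs_sin_le_one _)).trans (hXb θ ω))
  rw [funext h1] at h2
  have h3 := h2.unique (hasDerivAt_const _ _)
  have hi : ∀ g : sphere (0 : EuclideanSpace ℝ (Fin d)) 1 → ℝ, Continuous g → Integrable g (sph d) :=
    fun g hg => hg.integrable_of_hasCompactSupport (HasCompactSupport.of_compactSpace _)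
  have h4 : ∫ ω, (-(Real.cos (X 0 ω) * Y 0 ω) * Y 0 ω + -Real.sin (X 0 ω) * (-X 0 ω)) ∂(sph d) =
      ∫ ω, (-(r ^ 2) * (b ω ^ 2 * Real.cos (r * a ω)) + r * (a ω * Real.sin (r * a ω))) ∂(sph d) := by
    congr 1
    ext ω
    simp [X, Y]
    ring
  rw [h4, integral_add (hi _ (by fun_prop)) (hi _ (by fun_prop)), integral_const_mul,
    integral_const_mul] at h3
  have h5 : r * (r * ∫ ω, b ω ^ 2 * Real.cos (r * a ω) ∂(sph d)) =
      r * ∫ ω, a ω * Real.sin (r * a ω) ∂(sph d) := by linarith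
  exact mul_left_cancel₀ hr.ne' h5

theorem exists_onb (n : ℕ) (e : EuclideanSpace ℝ (Fin (n + 1))) (he : ‖e‖ = 1) :
    ∃ b : OrthonormalBasis (Fin (n + 1)) ℝ (EuclideanSpace ℝ (Fin (n + 1))), b 0 = e := by
  obtain ⟨b, hb⟩ := Orthonormal.exists_orthonormalBasis_extension_of_card_eq (𝕜 := ℝ)
    (ι := Fin (n + 1)) (E := EuclideanSpace ℝ (Fin (n + 1))) (by simp) (v := fun _ => e) (s := {0})
    (by
      rw [orthonormal_iff_ite]
      intro i j
      have : i = j := Subsingleton.elim _ _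
      simp [this, he])
  exact ⟨b, hb 0 rfl⟩

/-- With `u(r) = ∫ cos (r ⟪e, ω⟫) dω`, this is the equation `r (u + u'') = -n u'`. It is the sum of
`rotation_identity` over an orthonormal basis of the complement of `e`, as `∑ ⟪f, ω⟫ ^ 2 = 1 - ⟪e, ω⟫ ^ 2`. -/
theorem bessel_ode (n : ℕ) (e : EuclideanSpace ℝ (Fin (n + 1))) (he : ‖e‖ = 1) (r : ℝ) (hr : 0 < r) :
    r * (∫ ω, Real.cos (r * ⟪e, (ω : EuclideanSpace ℝ (Fin (n + 1)))⟫) ∂(sph (n + 1)) -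
      ∫ ω, ⟪e, (ω : EuclideanSpace ℝ (Fin (n + 1)))⟫ ^ 2 *
        Real.cos (r * ⟪e, (ω : EuclideanSpace ℝ (Fin (n + 1)))⟫) ∂(sph (n + 1))) =
      n * ∫ ω, ⟪e, (ω : EuclideanSpace ℝ (Fin (n + 1)))⟫ *
        Real.sin (r * ⟪e, (ω : EuclideanSpace ℝ (Fin (n + 1)))⟫) ∂(sph (n + 1)) := by
  obtain ⟨b, hb⟩ := exists_onb n e he
  have hi : ∀ g : sphere (0 : EuclideanSpace ℝ (Fin (n + 1))) 1 → ℝ, Continuous g →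
      Integrable g (sph (n + 1)) :=
    fun g hg => hg.integrable_of_hasCompactSupport (HasCompactSupport.of_compactSpace _)
  have hsum : ∑ j : Fin n, r * ∫ ω, ⟪b j.succ, (ω : EuclideanSpace ℝ (Fin (n + 1)))⟫ ^ 2 *
        Real.cos (r * ⟪e, (ω : EuclideanSpace ℝ (Fin (n + 1)))⟫) ∂(sph (n + 1)) =
      ∑ j : Fin n, ∫ ω, ⟪e, (ω : EuclideanSpace ℝ (Fin (n + 1)))⟫ *
        Real.sin (r * ⟪e, (ω : EuclideanSpace ℝ (Fin (n + 1)))⟫) ∂(sph (n + 1)) := by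
    refine Finset.sum_congr rfl fun j _ => rotation_identity e (b j.succ) he (by simp) ?_ r hr
    rw [← hb]
    exact b.orthonormal.2 (Fin.succ_ne_zero j).symm
  rw [Finset.sum_const, Finset.card_univ, Fintype.card_fin, nsmul_eq_mul] at hsum
  rw [← hsum, ← Finset.mul_sum, ← integral_finsetSum _ (fun j _ => hi _ (by fun_prop)),
    ← integral_sub (hi _ (by fun_prop)) (hi _ (by fun_prop))]
  congr 2
  ext ω
  have h := b.sum_sq_inner_right (ω : EuclideanSpace ℝ (Fin (n + 1)))
  rw [Fin.sum_univ_succ, hb] at h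
  have hω : ‖(ω : EuclideanSpace ℝ (Fin (n + 1)))‖ = 1 := by simp
  rw [hω] at h
  rw [← Finset.sum_mul]
  linear_combination (- Real.cos (r * ⟪e, (ω : EuclideanSpace ℝ (Fin (n + 1)))⟫)) * h

/-- Solutions of `r (u + u'') = -(m + 1) u'` that are bounded together with their derivative
are `O(r ^ (-(m + 1) / 2))`. Here `v = u'` and `w = u''`. -/
theorem energy_bound (m : ℕ) (S : ℝ) (u v w : ℝ → ℝ)
    (hu : ∀ r, HasDerivAt u (v r) r) (hv : ∀ r, HasDerivAt v (w r) r)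
    (hode : ∀ r, 0 < r → r * (u r + w r) = -((m : ℝ) + 1) * v r)
    (hub : ∀ r, |u r| ≤ S) (hvb : ∀ r, |v r| ≤ S) (r : ℝ) (hr : 0 < r) :
    r ^ (m + 1) * u r ^ 2 ≤ 8 * Real.exp 1 * ((m : ℝ) + 1) ^ (m + 1) * S ^ 2 := by
  set n : ℝ := (m : ℝ) + 1 with hn
  have hn0 : 0 < n := by positivity
  have husq : ∀ r, u r ^ 2 ≤ S ^ 2 := fun r => sq_le_sq' (abs_le.mp (hub r)).1 (abs_le.mp (hub r)).2
  have hvsq : ∀ r, v r ^ 2 ≤ S ^ 2 := fun r => sq_le_sq' (abs_le.mp (hvb r)).1 (abs_le.mp (hvb r)).2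
  have he1 : 1 ≤ Real.exp 1 := Real.one_le_exp zero_le_one
  rcases le_total r n with hrn | hrn
  · have h1 : r ^ (m + 1) ≤ n ^ (m + 1) := by gcongr
    calc r ^ (m + 1) * u r ^ 2 ≤ n ^ (m + 1) * S ^ 2 := by
          exact mul_le_mul h1 (husq r) (sq_nonneg _) (by positivity)
      _ = 1 * (n ^ (m + 1) * S ^ 2) := by ring
      _ ≤ (8 * Real.exp 1) * (n ^ (m + 1) * S ^ 2) := by
          gcongr; linarith
      _ = _ := by ring
  -- The cross term makes the leading part of the derivative cancel: with `n = m + 1`,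
  -- `E' = -n r ^ (n - 2) u u'`, which is at most `n E / r ^ 2` for `r ≥ n`.
  let E : ℝ → ℝ := fun r => r ^ (m + 1) * (u r ^ 2 + v r ^ 2) + n * r ^ m * (u r * v r)
  have hEd : ∀ r, 0 < r → HasDerivAt E (-(n * r ^ m * (u r * v r) / r)) r := by
    intro r hr
    have h := ((hasDerivAt_pow (m + 1) r).mul (((hu r).pow 2).add ((hv r).pow 2))).add
      (((hasDerivAt_pow m r).const_mul n).mul ((hu r).mul (hv r)))
    refine h.congr_deriv ?_
    have hw : w r = -u r - n * v r / r := by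
      have := hode r hr
      field_simp
      linarith
    have hm : (m : ℝ) = n - 1 := by rw [hn]; ring
    have hpm : (m : ℝ) * r ^ (m - 1) = m * r ^ m / r := by
      rcases Nat.eq_zero_or_pos m with h0 | h0
      · simp [h0]
      · obtain ⟨k, rfl⟩ : ∃ k, m = k + 1 := ⟨m - 1, by omega⟩
        simp only [Nat.add_sub_cancel]
        field_simp
        ring
    rw [hm] at hpm
    simp only [hw, hm, hpm, Pi.pow_apply, Pi.add_apply, Pi.mul_apply, Nat.cast_add, Nat.cast_one,
      Nat.add_sub_cancel]
    field_simp
    ring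
  have hElow : ∀ r, n ≤ r → r ^ (m + 1) * (u r ^ 2 + v r ^ 2) ≤ 2 * E r := by
    intro r hr
    have hr0 : 0 < r := hn0.trans_le hr
    have h1 : n * r ^ m * |u r * v r| ≤ r ^ (m + 1) * ((u r ^ 2 + v r ^ 2) / 2) := by
      rw [pow_succ']
      gcongr
      rw [abs_le]; constructor <;> nlinarith [sq_nonneg (u r - v r), sq_nonneg (u r + v r)]
    have h2 : -(n * r ^ m * |u r * v r|) ≤ n * r ^ m * (u r * v r) := by
      rw [← mul_neg]; gcongr; exact neg_abs_le _
    simp only [E]; linarith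
  -- the factor `exp (n / r)` absorbs the growth rate `n / r ^ 2`
  let G : ℝ → ℝ := fun r => E r * Real.exp (n / r)
  have hGd : ∀ r, 0 < r → HasDerivAt G (-(n * r ^ m * (u r * v r) / r) * Real.exp (n / r) +
      E r * (Real.exp (n / r) * (-n / r ^ 2))) r := by
    intro r hr
    refine (hEd r hr).mul (HasDerivAt.exp ?_)
    have := (hasDerivAt_inv hr.ne').const_mul n
    simp only [div_eq_mul_inv] 
    refine this.congr_deriv ?_
    ring
  have hanti : AntitoneOn G (Set.Ici n) := by
    refine antitoneOn_of_deriv_nonpos (convex_Ici n) ?_ ?_ ?_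
    · exact fun r hr => (hGd r (hn0.trans_le hr)).continuousAt.continuousWithinAt
    · intro r hr
      rw [interior_Ici] at hr
      exact (hGd r (hn0.trans hr)).differentiableAt.differentiableWithinAt
    · intro r hr
      rw [interior_Ici] at hr
      have hr0 : 0 < r := hn0.trans hr
      rw [(hGd r hr0).deriv]
      have h1 := hElow r (le_of_lt hr)
      have h2 : -(n * r ^ m * (u r * v r) / r) ≤ E r * (n / r ^ 2) := by
        have h3 : -(u r * v r) ≤ (u r ^ 2 + v r ^ 2) / 2 := by nlinarith [sq_nonneg (u r + v r)]
        calc -(n * r ^ m * (u r * v r) / r) = n * r ^ m / r * (-(u r * v r)) := by ring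
          _ ≤ n * r ^ m / r * ((u r ^ 2 + v r ^ 2) / 2) := by gcongr
          _ = n / r ^ 2 * (r ^ (m + 1) * (u r ^ 2 + v r ^ 2) / 2) := by field_simp; ring
          _ ≤ n / r ^ 2 * E r := by gcongr; linarith
          _ = _ := by ring
      have h4 : 0 < Real.exp (n / r) := Real.exp_pos _
      have : -(n * r ^ m * (u r * v r) / r) * Real.exp (n / r) +
          E r * (Real.exp (n / r) * (-n / r ^ 2)) =
          Real.exp (n / r) * (-(n * r ^ m * (u r * v r) / r) - E r * (n / r ^ 2)) := by ring
      rw [this]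
      exact mul_nonpos_of_nonneg_of_nonpos h4.le (by linarith)
  have hG := hanti (Set.mem_Ici.mpr le_rfl) (Set.mem_Ici.mpr hrn) hrn
  have hGn : G n ≤ 4 * n ^ (m + 1) * S ^ 2 * Real.exp 1 := by
    simp only [G, E]
    rw [div_self hn0.ne']
    gcongr
    have h1 : u n * v n ≤ S ^ 2 := by nlinarith [husq n, hvsq n, sq_nonneg (u n - v n)]
    have h2 : u n ^ 2 + v n ^ 2 ≤ 2 * S ^ 2 := by linarith [husq n, hvsq n]
    have h3 : n ^ (m + 1) * (u n ^ 2 + v n ^ 2) ≤ n ^ (m + 1) * (2 * S ^ 2) := by gcongr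
    have h4 : n * n ^ m * (u n * v n) ≤ n * n ^ m * S ^ 2 := by gcongr
    have h5 : 0 ≤ n ^ (m + 1) * S ^ 2 := by positivity
    rw [pow_succ'] at *
    linarith
  have hlow := hElow r hrn
  have hE0 : 0 ≤ E r := by
    have : 0 ≤ r ^ (m + 1) * (u r ^ 2 + v r ^ 2) := by positivity
    linarith
  have hEG : E r ≤ G r := le_mul_of_one_le_right hE0 (Real.one_le_exp (by positivity))
  have : r ^ (m + 1) * u r ^ 2 ≤ r ^ (m + 1) * (u r ^ 2 + v r ^ 2) := by
    gcongr; nlinarith [sq_nonneg (v r)]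
  linarith
/-- The Fourier transform of the surface measure of the unit sphere in `ℝ^d`, `d = m + 2`, is
`O(‖y‖ ^ (-(d - 1) / 2))`. -/
theorem sphere_decay (m : ℕ) : ∃ C, 0 < C ∧ ∀ y : EuclideanSpace ℝ (Fin (m + 2)), y ≠ 0 →
    ‖∫ ω, Complex.exp (I * ((⟪y, (ω : EuclideanSpace ℝ (Fin (m + 2)))⟫ : ℝ) : ℂ)) ∂(sph (m + 2))‖
      ≤ C * ‖y‖ ^ (-((m : ℝ) + 1) / 2) := by
  set S := (sph (m + 2)).real univ
  set M : ℝ := 8 * Real.exp 1 * ((m : ℝ) + 1) ^ (m + 1) * S ^ 2 with hM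
  have hM0 : 0 ≤ M := by positivity
  refine ⟨Real.sqrt M + 1, by positivity, fun y hy => ?_⟩
  have hi : ∀ g : sphere (0 : EuclideanSpace ℝ (Fin (m + 2))) 1 → ℝ, Continuous g →
      Integrable g (sph (m + 2)) :=
    fun g hg => hg.integrable_of_hasCompactSupport (HasCompactSupport.of_compactSpace _)
  have hr : 0 < ‖y‖ := norm_pos_iff.mpr hy
  set e := ‖y‖⁻¹ • y with he_def
  have he : ‖e‖ = 1 := by
    rw [he_def, norm_smul, norm_inv, norm_norm, inv_mul_cancel₀ hr.ne']
  have hye : y = ‖y‖ • e := by rw [he_def, smul_smul, mul_inv_cancel₀ hr.ne', one_smul]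
  let a : sphere (0 : EuclideanSpace ℝ (Fin (m + 2))) 1 → ℝ :=
    fun ω => ⟪e, (ω : EuclideanSpace ℝ (Fin (m + 2)))⟫
  have hac : Continuous a := by fun_prop
  have ha1 : ∀ ω, |a ω| ≤ 1 := abs_inner_sphere_le e he
  have hbd : ∀ g : sphere (0 : EuclideanSpace ℝ (Fin (m + 2))) 1 → ℝ, (∀ ω, |g ω| ≤ 1) →
      |∫ ω, g ω ∂(sph (m + 2))| ≤ S := by
    intro g hg
    have := norm_integral_le_of_norm_le_const (μ := sph (m + 2)) (f := g) (C := 1)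
      (.of_forall hg)
    rwa [one_mul] at this
  let u : ℝ → ℝ := fun r => ∫ ω, Real.cos (r * a ω) ∂(sph (m + 2))
  let v : ℝ → ℝ := fun r => ∫ ω, -(a ω * Real.sin (r * a ω)) ∂(sph (m + 2))
  let w : ℝ → ℝ := fun r => ∫ ω, -(a ω ^ 2 * Real.cos (r * a ω)) ∂(sph (m + 2))
  have hlin : ∀ r ω, HasDerivAt (fun r => r * a ω) (a ω) r := fun r ω => by
    simpa using (hasDerivAt_id r).mul_const (a ω)
  have hvb : ∀ r ω, |-(a ω * Real.sin (r * a ω))| ≤ 1 := fun r ω => by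
    rw [abs_neg, abs_mul]
    exact mul_le_one₀ (ha1 ω) (abs_nonneg _) (Real.abs_sin_le_one _)
  have hwb : ∀ r ω, |-(a ω ^ 2 * Real.cos (r * a ω))| ≤ 1 := fun r ω => by
    rw [abs_neg, abs_mul, abs_pow]
    exact mul_le_one₀ (pow_le_one₀ (abs_nonneg _) (ha1 ω)) (abs_nonneg _) (Real.abs_cos_le_one _)
  have hu : ∀ r, HasDerivAt u (v r) r := fun r =>
    hasDerivAt_integral_sph 1 r (fun r => by fun_prop) (fun r => by fun_prop)
      (fun r ω => (hlin r ω).cos.congr_deriv (by ring)) hvb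
  have hv : ∀ r, HasDerivAt v (w r) r := fun r =>
    hasDerivAt_integral_sph 1 r (fun r => by fun_prop) (fun r => by fun_prop)
      (fun r ω => ((hlin r ω).sin.const_mul (a ω)).neg.congr_deriv (by ring)) hwb
  have hode : ∀ r, 0 < r → r * (u r + w r) = -((m : ℝ) + 1) * v r := by
    intro r hr
    have h := bessel_ode (m + 1) e he r hr
    simp only [u, v, w, integral_neg]
    push_cast at h
    linarith
  have hE := energy_bound m S u v w hu hv hode
    (fun r => hbd _ fun ω => Real.abs_cos_le_one _) (fun r => hbd _ (hvb r)) ‖y‖ hr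
  -- the sine part vanishes by oddness
  have hreal : ∫ ω, Complex.exp (I * ((⟪y, (ω : EuclideanSpace ℝ (Fin (m + 2)))⟫ : ℝ) : ℂ))
      ∂(sph (m + 2)) = ((u ‖y‖ : ℝ) : ℂ) := by
    have h1 : ∀ ω : sphere (0 : EuclideanSpace ℝ (Fin (m + 2))) 1,
        Complex.exp (I * ((⟪y, (ω : EuclideanSpace ℝ (Fin (m + 2)))⟫ : ℝ) : ℂ)) =
        ((Real.cos ⟪y, (ω : EuclideanSpace ℝ (Fin (m + 2)))⟫ : ℝ) : ℂ) +
        ((Real.sin ⟪y, (ω : EuclideanSpace ℝ (Fin (m + 2)))⟫ : ℝ) : ℂ) * I := by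
      intro ω
      rw [mul_comm, Complex.exp_mul_I, Complex.ofReal_cos, Complex.ofReal_sin]
    simp_rw [h1]
    have hcos := hi (fun ω => Real.cos ⟪y, (ω : EuclideanSpace ℝ (Fin (m + 2)))⟫) (by fun_prop)
    have hsin := hi (fun ω => Real.sin ⟪y, (ω : EuclideanSpace ℝ (Fin (m + 2)))⟫) (by fun_prop)
    rw [integral_add hcos.ofReal (hsin.ofReal.mul_const _),
      integral_mul_const, integral_complex_ofReal, integral_complex_ofReal, integral_sin_eq_zero]
    simp only [Complex.ofReal_zero, zero_mul, add_zero, u, a]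
    congr 2
    ext ω
    conv_lhs => rw [hye]
    rw [real_inner_smul_left]
  rw [hreal, Complex.norm_real, Real.norm_eq_abs]
  have hp : (‖y‖ ^ (-((m : ℝ) + 1) / 2)) ^ 2 = (‖y‖ ^ (m + 1))⁻¹ := by
    rw [← Real.rpow_natCast, ← Real.rpow_mul hr.le, ← Real.rpow_natCast ‖y‖ (m + 1),
      ← Real.rpow_neg hr.le]
    congr 1; push_cast; ring
  have hp0 : 0 < ‖y‖ ^ (-((m : ℝ) + 1) / 2) := Real.rpow_pos_of_pos hr _
  have h2 : |u ‖y‖| ≤ Real.sqrt M * ‖y‖ ^ (-((m : ℝ) + 1) / 2) := by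
    refine abs_le_of_sq_le_sq ?_ (by positivity)
    rw [mul_pow, Real.sq_sqrt hM0, hp, ← div_eq_mul_inv, le_div_iff₀ (by positivity)]
    linarith
  exact h2.trans (by gcongr; linarith)

/-! ### The radial integral and polar coordinates -/

theorem fourier_decay (f : ℝ → ℂ) (hf : ContDiff ℝ (⊤ : ℕ∞) f) (hc : HasCompactSupport f) (N : ℕ) :
    ∃ C, 0 < C ∧ ∀ t : ℝ, |t| ^ N * ‖∫ u : ℝ, Complex.exp (I * ((u * t : ℝ) : ℂ)) * f u‖ ≤ C := by
  obtain ⟨C, hC0, hC⟩ := (FourierTransform.fourier (hc.toSchwartzMap hf)).decay N 0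
  have h2π : (0 : ℝ) < 2 * Real.pi := by positivity
  refine ⟨(2 * Real.pi) ^ N * C, by positivity, fun t => ?_⟩
  have h := hC (-t / (2 * Real.pi))
  rw [norm_iteratedFDeriv_zero, SchwartzMap.fourier_coe, Real.fourier_real_eq_integral_exp_smul] at h
  have hint : ∫ v : ℝ, Complex.exp (((-2 * Real.pi * v * (-t / (2 * Real.pi)) : ℝ) : ℂ) * I) •
      (hc.toSchwartzMap hf) v = ∫ u : ℝ, Complex.exp (I * ((u * t : ℝ) : ℂ)) * f u := by
    congr 1
    ext v
    rw [smul_eq_mul, mul_comm I]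
    have : -2 * Real.pi * v * (-t / (2 * Real.pi)) = v * t := by field_simp
    rw [this]
    rfl
  rw [hint] at h
  have ht : ‖-t / (2 * Real.pi)‖ = |t| / (2 * Real.pi) := by
    rw [Real.norm_eq_abs, abs_div, abs_neg, abs_of_pos h2π]
  rw [ht, div_pow] at h
  calc _ = (2 * Real.pi) ^ N * (|t| ^ N / (2 * Real.pi) ^ N *
        ‖∫ u : ℝ, Complex.exp (I * ((u * t : ℝ) : ℂ)) * f u‖) := by
          rw [← mul_assoc, mul_div_cancel₀ _ (by positivity)]
    _ ≤ _ := by gcongr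

theorem hasCompactSupport_of_cutoff {κ : ℝ} {ζt : ℝ → ℝ}
    (hζ_zero : ∀ s : ℝ, κ < |s| → ζt s = 0) : HasCompactSupport ζt := by
  refine HasCompactSupport.intro (isCompact_Icc (a := -κ) (b := κ)) fun x hx => hζ_zero x ?_
  by_contra h
  exact hx (abs_le.mp (not_lt.mp h))

/-- Decay of the radial integral, uniformly in `lam`. Substituting `r = 1 + u / lam` and expanding
`(1 + u / lam) ^ n` reduces it to Fourier transforms of the test functions `u ^ j * ζt u` at `A / lam`. -/
theorem radial_decay (n : ℕ) (κ : ℝ) (ζt : ℝ → ℝ) (hζ_smooth : ContDiff ℝ (⊤ : ℕ∞) ζt)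
    (hκ : 1 ≤ κ) (hζ_zero : ∀ s : ℝ, κ < |s| → ζt s = 0) :
    ∃ C, 0 < C ∧ ∀ A lam : ℝ, 0 < A → κ + 1 ≤ lam →
      (A / lam) ^ n * ‖∫ r in Ioi (0 : ℝ), (r ^ n) •
        (Complex.exp (I * ((r * A : ℝ) : ℂ)) * ((ζt (lam * r - lam) : ℝ) : ℂ))‖ ≤ C * lam⁻¹ := by
  have hζc := hasCompactSupport_of_cutoff hζ_zero
  let f : ℕ → ℝ → ℂ := fun j u => ((u ^ j * ζt u : ℝ) : ℂ)
  have hfs : ∀ j, ContDiff ℝ (⊤ : ℕ∞) (f j) := fun j =>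
    Complex.ofRealCLM.contDiff.comp ((contDiff_id.pow j).mul hζ_smooth)
  have hfc : ∀ j, HasCompactSupport (f j) := fun j =>
    (hζc.mul_left (f := fun u => u ^ j)).comp_left (g := fun x : ℝ => (x : ℂ)) Complex.ofReal_zero
  choose C hC0 hC using fun j => fourier_decay (f j) (hfs j) (hfc j) n
  refine ⟨∑ j ∈ Finset.range (n + 1), (n.choose j) * C j, ?_, ?_⟩
  · refine Finset.sum_pos (fun j hj => ?_) ⟨0, by simp⟩
    have := Nat.choose_pos (n := n) (k := j) (by simpa [Nat.lt_succ_iff] using hj)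
    have := hC0 j
    positivity
  intro A lam hA hlam
  have hlam0 : 0 < lam := by linarith
  have hlam1 : 1 ≤ lam := by linarith
  let G : ℝ → ℂ := fun u => (((1 + u / lam) ^ n : ℝ)) •
      (Complex.exp (I * (((1 + u / lam) * A : ℝ) : ℂ)) * ((ζt u : ℝ) : ℂ))
  have h1 : ∫ r in Ioi (0 : ℝ), (r ^ n) •
        (Complex.exp (I * ((r * A : ℝ) : ℂ)) * ((ζt (lam * r - lam) : ℝ) : ℂ)) =
      ∫ r : ℝ, G (lam * r - lam) := by
    rw [← integral_indicator measurableSet_Ioi]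
    congr 1
    ext r
    have hr : 1 + (lam * r - lam) / lam = r := by field_simp; ring
    simp only [G, hr]
    by_cases h : r ∈ Ioi (0 : ℝ)
    · rw [indicator_of_mem h]
    · rw [indicator_of_notMem h, hζ_zero]
      · simp
      · rw [mem_Ioi, not_lt] at h
        rw [lt_abs]; right
        nlinarith
  have h2 : ∫ r : ℝ, G (lam * r - lam) = lam⁻¹ • ∫ u, G u := by
    rw [Measure.integral_comp_mul_left (fun x => G (x - lam)) lam, integral_sub_right_eq_self G lam,
      abs_of_pos (inv_pos.mpr hlam0)]
  have h3 : ∫ u, G u = Complex.exp (I * (A : ℂ)) * ∑ j ∈ Finset.range (n + 1),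
      (((n.choose j : ℝ) * (lam⁻¹) ^ j : ℝ) : ℂ) *
        ∫ u : ℝ, Complex.exp (I * ((u * (A / lam) : ℝ) : ℂ)) * f j u := by
    have hint : ∀ j, Integrable (fun u : ℝ => Complex.exp (I * ((u * (A / lam) : ℝ) : ℂ)) * f j u) := by
      intro j
      refine Continuous.integrable_of_hasCompactSupport ?_ ((hfc j).mul_left)
      have := (hfs j).continuous
      fun_prop
    simp_rw [← integral_const_mul]
    rw [← integral_finsetSum _ (fun j _ => (hint j).const_mul _), ← integral_const_mul]
    congr 1
    ext u
    have hexp : Complex.exp (I * (((1 + u / lam) * A : ℝ) : ℂ)) =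
        Complex.exp (I * (A : ℂ)) * Complex.exp (I * ((u * (A / lam) : ℝ) : ℂ)) := by
      rw [← Complex.exp_add]; congr 1; push_cast; ring
    have hpow : (1 + u / lam) ^ n =
        ∑ j ∈ Finset.range (n + 1), (n.choose j : ℝ) * (lam⁻¹) ^ j * u ^ j := by
      rw [add_comm, add_pow]
      refine Finset.sum_congr rfl fun j _ => ?_
      rw [div_eq_mul_inv, mul_pow]; ring
    simp only [G, f]
    rw [hexp, hpow, Finset.mul_sum, Complex.real_smul, Complex.ofReal_sum, Finset.sum_mul]
    refine Finset.sum_congr rfl fun j _ => ?_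
    push_cast
    ring
  rw [h1, h2, h3, norm_smul, norm_mul, Complex.norm_exp_I_mul_ofReal, one_mul, Real.norm_eq_abs,
    abs_of_pos (inv_pos.mpr hlam0)]
  have hAl : 0 < A / lam := by positivity
  calc (A / lam) ^ n * (lam⁻¹ * _) ≤ (A / lam) ^ n * (lam⁻¹ * ∑ j ∈ Finset.range (n + 1),
        (n.choose j : ℝ) * ‖∫ u : ℝ, Complex.exp (I * ((u * (A / lam) : ℝ) : ℂ)) * f j u‖) := by
        gcongr
        refine norm_sum_le_of_le _ fun j _ => ?_
        rw [norm_mul, Complex.norm_real, Real.norm_of_nonneg (by positivity)]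
        gcongr
        exact mul_le_of_le_one_right (by positivity)
          (pow_le_one₀ (by positivity) (inv_le_one_of_one_le₀ hlam1))
    _ = (∑ j ∈ Finset.range (n + 1), (n.choose j : ℝ) * (|A / lam| ^ n *
        ‖∫ u : ℝ, Complex.exp (I * ((u * (A / lam) : ℝ) : ℂ)) * f j u‖)) * lam⁻¹ := by
        rw [abs_of_pos hAl, Finset.mul_sum, Finset.mul_sum, Finset.sum_mul]
        refine Finset.sum_congr rfl fun j _ => by ring
    _ ≤ _ := by
        gcongr with j _
        exact hC j _

theorem integral_volumeIoiPow (n : ℕ) (g : ℝ → ℂ) :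
    ∫ r : Ioi (0 : ℝ), g r ∂(Measure.volumeIoiPow n) = ∫ r in Ioi (0 : ℝ), (r ^ n) • g r := by
  simp only [Measure.volumeIoiPow, ENNReal.ofReal]
  rw [integral_withDensity_eq_integral_smul,
    integral_subtype_comap measurableSet_Ioi fun a ↦ Real.toNNReal (a ^ n) • g a,
    setIntegral_congr_fun measurableSet_Ioi fun x hx ↦ ?_]
  · rw [NNReal.smul_def, Real.coe_toNNReal _ (pow_nonneg hx.out.le _)]
  · exact (measurable_subtype_coe.pow_const _).real_toNNReal

/-- Integration in polar coordinates on `ℝ^(n+1)`. -/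
theorem polar (n : ℕ) (F : EuclideanSpace ℝ (Fin (n + 1)) → ℂ) (hF : Integrable F) :
    Integrable (fun p : sphere (0 : EuclideanSpace ℝ (Fin (n + 1))) 1 × Ioi (0 : ℝ) =>
        F ((p.2 : ℝ) • (p.1 : EuclideanSpace ℝ (Fin (n + 1)))))
      ((sph (n + 1)).prod (Measure.volumeIoiPow n)) ∧
    ∫ ξ, F ξ = ∫ p : sphere (0 : EuclideanSpace ℝ (Fin (n + 1))) 1 × Ioi (0 : ℝ),
        F ((p.2 : ℝ) • (p.1 : EuclideanSpace ℝ (Fin (n + 1))))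
      ∂((sph (n + 1)).prod (Measure.volumeIoiPow n)) := by
  have hmp := (volume : Measure (EuclideanSpace ℝ (Fin (n + 1)))).measurePreserving_homeomorphUnitSphereProd
  rw [finrank_euclideanSpace_fin, Nat.add_sub_cancel] at hmp
  have key : ∀ ξ : ({0}ᶜ : Set (EuclideanSpace ℝ (Fin (n + 1)))),
      (((homeomorphUnitSphereProd _ ξ).2 : ℝ) • ((homeomorphUnitSphereProd _ ξ).1 :
        EuclideanSpace ℝ (Fin (n + 1)))) = ξ := by
    intro ξ
    rw [← homeomorphUnitSphereProd_symm_apply_coe, Homeomorph.symm_apply_apply]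
  constructor
  · rw [← hmp.integrable_comp_emb (Homeomorph.measurableEmbedding _)]
    simp only [Function.comp_def, key]
    have := hF.integrableOn (s := {0}ᶜ)
    rwa [integrableOn_iff_comap_subtypeVal (by measurability)] at this
  · rw [← hmp.integral_comp (Homeomorph.measurableEmbedding _)]
    simp only [key]
    rw [integral_subtype_comap (measurableSet_singleton _).compl F, restrict_compl_singleton]

end HalfWave

/-! ### The kernel bound -/

open HalfWave Metric Set in
/-- Bound on the rescaled half-wave kernel `K_{κ/λ,1}(s,y) = ∫ e^{i(s|ξ|+y·ξ)} ζ̃_{κ,λ}(λξ) dξ`: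
`sup_y |K_{κ/λ,1}(s,y)| ≤ C (λ⁻¹ s^{−(d−1)/2} + λ⁻¹ (s/λ)^{−(d−1)})` for `s > 0`, `λ ≥ κ + 1`. -/
theorem halfwave_rescaled_kernel_decay (d : ℕ) (hd : 2 ≤ d) (κ : ℝ) (hκ : 1 ≤ κ)
    (ζt : ℝ → ℝ) (hζ_smooth : ContDiff ℝ (⊤ : ℕ∞) ζt) (hζ_nonneg : ∀ s, 0 ≤ ζt s)
    (hζ_one : ∀ s : ℝ, |s| ≤ 3 / 4 * κ → ζt s = 1)
    (hζ_zero : ∀ s : ℝ, κ < |s| → ζt s = 0) :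
    ∃ C > 0, ∀ s : ℝ, 0 < s → ∀ lam : ℕ, κ + 1 ≤ (lam : ℝ) →
      ∀ y : EuclideanSpace ℝ (Fin d),
        ‖∫ ξ : EuclideanSpace ℝ (Fin d),
            Complex.exp (Complex.I * ((s * ‖ξ‖ + ⟪y, ξ⟫ : ℝ) : ℂ)) *
              ((ζt ((lam : ℝ) * ‖ξ‖ - lam) : ℝ) : ℂ)‖
          ≤ C * ((lam : ℝ)⁻¹ * s ^ (-((d : ℝ) - 1) / 2)
              + (lam : ℝ)⁻¹ * (s / lam) ^ (-((d : ℝ) - 1))) := by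
  obtain ⟨m, rfl⟩ : ∃ m, d = m + 2 := ⟨d - 2, by omega⟩
  obtain ⟨C₁, hC₁, hsph⟩ := sphere_decay m
  obtain ⟨C₂, hC₂, hrad⟩ := radial_decay (m + 1) κ ζt hζ_smooth hκ hζ_zero
  have hζcont : Continuous ζt := hζ_smooth.continuous
  obtain ⟨B, hB⟩ := (hasCompactSupport_of_cutoff hζ_zero).exists_bound_of_continuous hζcont
  have hB0 : 0 ≤ B := (norm_nonneg _).trans (hB 0)
  set S := (sph (m + 2)).real univ
  have hS0 : 0 ≤ S := measureReal_nonneg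
  set q : ℝ := -((m : ℝ) + 1) / 2 with hq
  have hq0 : q ≤ 0 := by rw [hq]; apply div_nonpos_of_nonpos_of_nonneg <;> linarith [m.cast_nonneg (α := ℝ)]
  set c : ℝ := (1 / (2 * (1 + κ))) with hc
  have hc0 : 0 < c := by positivity
  set D₁ : ℝ := 2 ^ (m + 1) * B * C₁ * c ^ q * (2 * κ) with hD₁
  have hD₁0 : 0 ≤ D₁ := by positivity
  set D₂ : ℝ := 2 ^ (m + 1) * C₂ * S with hD₂
  have hD₂0 : 0 ≤ D₂ := by positivity
  refine ⟨D₁ + D₂ + 1, by positivity, fun s hs lam hlam y => ?_⟩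
  have hl0 : (0 : ℝ) < lam := by linarith
  have hexp1 : -(((m + 2 : ℕ) : ℝ) - 1) / 2 = q := by rw [hq]; push_cast; ring
  have hexp2 : (s / lam) ^ (-(((m + 2 : ℕ) : ℝ) - 1)) = ((s / lam) ^ (m + 1))⁻¹ := by
    rw [← Real.rpow_natCast, ← Real.rpow_neg (by positivity)]
    congr 1; push_cast; ring
  rw [hexp1, hexp2]
  have hT₁ : 0 ≤ (lam : ℝ)⁻¹ * s ^ q := by positivity
  have hT₂ : 0 ≤ (lam : ℝ)⁻¹ * ((s / lam) ^ (m + 1))⁻¹ := by positivity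
  have hsupp : ∀ r : ℝ, r ∉ Icc (1 - κ / lam) (1 + κ / lam) → ζt (lam * r - lam) = 0 := by
    intro r hr
    apply hζ_zero
    by_contra h
    apply hr
    rw [not_lt, abs_le] at h
    constructor
    · have : lam * (1 - κ / lam) ≤ lam * r := by
        rw [mul_sub, mul_div_cancel₀ _ hl0.ne']; linarith
      exact le_of_mul_le_mul_left this hl0
    · have : lam * r ≤ lam * (1 + κ / lam) := by
        rw [mul_add, mul_div_cancel₀ _ hl0.ne']; linarith
      exact le_of_mul_le_mul_left this hl0
  -- hence `r` lies in `[1 / (1 + κ), 2]` on the support of the cutoff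
  have hκl : κ / lam ≤ κ / (κ + 1) := by gcongr
  have hκ1 : κ / (κ + 1) = 1 - 1 / (1 + κ) := by field_simp; ring
  have hκpos : 0 < 1 / (1 + κ) := by positivity
  let F : EuclideanSpace ℝ (Fin (m + 2)) → ℂ := fun ξ =>
    Complex.exp (Complex.I * ((s * ‖ξ‖ + ⟪y, ξ⟫ : ℝ) : ℂ)) *
              ((ζt ((lam : ℝ) * ‖ξ‖ - lam) : ℝ) : ℂ)
  have hFi : Integrable F := by
    refine Continuous.integrable_of_hasCompactSupport (by fun_prop) ?_
    refine HasCompactSupport.intro (isCompact_closedBall (0 : EuclideanSpace ℝ (Fin (m + 2))) 2)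
      fun ξ hξ => ?_
    simp only [F]
    rw [hsupp, Complex.ofReal_zero, mul_zero]
    intro h
    apply hξ
    rw [mem_closedBall_zero_iff]
    linarith [h.2]
  obtain ⟨hPi, hPe⟩ := polar (m + 1) F hFi
  have hFpol : ∀ (ω : sphere (0 : EuclideanSpace ℝ (Fin (m + 2))) 1) (r : ℝ), 0 < r →
      F (r • (ω : EuclideanSpace ℝ (Fin (m + 2)))) =
        Complex.exp (I * ((r * (s + ⟪y, (ω : EuclideanSpace ℝ (Fin (m + 2)))⟫) : ℝ) : ℂ)) *
          ((ζt (lam * r - lam) : ℝ) : ℂ) := by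
    intro ω r hr
    have : ‖r • (ω : EuclideanSpace ℝ (Fin (m + 2)))‖ = r := by
      rw [norm_smul, Real.norm_of_nonneg hr.le]; simp
    simp only [F]
    rw [this, real_inner_smul_right]
    congr 4
    ring
  change ‖∫ ξ, F ξ‖ ≤ _
  rw [hPe]
  rcases le_total (s / 2) ‖y‖ with hys | hys
  · -- dispersive regime: decay of the sphere measure
    suffices h : ‖∫ p : sphere (0 : EuclideanSpace ℝ (Fin (m + 2))) 1 × Ioi (0 : ℝ),
        F ((p.2 : ℝ) • (p.1 : EuclideanSpace ℝ (Fin (m + 2))))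
        ∂((sph (m + 2)).prod (Measure.volumeIoiPow (m + 1)))‖ ≤ D₁ * ((lam : ℝ)⁻¹ * s ^ q) by
      nlinarith
    rw [integral_prod_symm _ hPi]
    have hinner : ∀ r : ℝ, 0 < r → ∫ ω, F (r • (ω : EuclideanSpace ℝ (Fin (m + 2)))) ∂(sph (m + 2)) =
        Complex.exp (I * ((r * s : ℝ) : ℂ)) * ((ζt (lam * r - lam) : ℝ) : ℂ) *
        ∫ ω, Complex.exp (I * ((⟪r • y, (ω : EuclideanSpace ℝ (Fin (m + 2)))⟫ : ℝ) : ℂ))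
          ∂(sph (m + 2)) := by
      intro r hr
      rw [← integral_const_mul]
      congr 1
      ext ω
      rw [hFpol ω r hr, mul_right_comm, ← Complex.exp_add, real_inner_smul_left]
      congr 2
      push_cast; ring
    rw [integral_volumeIoiPow (m + 1)
      (fun r => ∫ ω, F (r • (ω : EuclideanSpace ℝ (Fin (m + 2)))) ∂(sph (m + 2)))]
    set P : ℝ := 2 ^ (m + 1) * (B * (C₁ * (c * s) ^ q)) with hP
    have hP0 : 0 ≤ P := by positivity
    have hpt : ∀ r ∈ Ioi (0 : ℝ), ‖(r ^ (m + 1)) •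
        ∫ ω, F (r • (ω : EuclideanSpace ℝ (Fin (m + 2)))) ∂(sph (m + 2))‖ ≤
        (Icc (1 - κ / lam) (1 + κ / lam)).indicator (fun _ => P) r := by
      intro r hr
      rw [hinner r hr]
      by_cases h : r ∈ Icc (1 - κ / lam) (1 + κ / lam)
      · rw [indicator_of_mem h, norm_smul, norm_mul, norm_mul, Complex.norm_exp_I_mul_ofReal,
          one_mul, Complex.norm_real, norm_pow, Real.norm_of_nonneg (le_of_lt hr)]
        have hr2 : r ≤ 2 := by linarith [h.2]
        have hrl : 1 / (1 + κ) ≤ r := by linarith [h.1]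
        have hr0 : 0 < r := hr
        have hy0 : 0 < ‖y‖ := by linarith
        have hcs : c * s ≤ ‖r • y‖ := by
          rw [norm_smul, Real.norm_of_nonneg hr0.le]
          calc c * s = 1 / (1 + κ) * (s / 2) := by rw [hc]; field_simp
            _ ≤ r * ‖y‖ := by gcongr
        have hsp := hsph (r • y) (smul_ne_zero hr0.ne' (norm_pos_iff.mp hy0))
        have hmono : ‖r • y‖ ^ q ≤ (c * s) ^ q :=
          Real.rpow_le_rpow_of_nonpos (by positivity) hcs hq0
        rw [hP]
        gcongr
        · exact hB _
        · exact hsp.trans (by gcongr)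
      · rw [indicator_of_notMem h, hsupp r h]
        simp
    have hind : Integrable ((Icc (1 - κ / lam) (1 + κ / lam)).indicator (fun _ : ℝ => P)) :=
      (integrable_indicator_iff measurableSet_Icc).mpr
        (integrableOn_const (by simp) (by simp))
    calc _ ≤ ∫ r in Ioi (0 : ℝ), (Icc (1 - κ / lam) (1 + κ / lam)).indicator (fun _ => P) r :=
          norm_integral_le_of_norm_le hind.integrableOn
            ((ae_restrict_mem measurableSet_Ioi).mono hpt)
      _ ≤ ∫ r, (Icc (1 - κ / lam) (1 + κ / lam)).indicator (fun _ => P) r :=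
          setIntegral_le_integral hind (.of_forall fun r => indicator_nonneg (fun _ _ => hP0) r)
      _ = (2 * κ / lam) * P := by
          rw [integral_indicator_const _ measurableSet_Icc, smul_eq_mul, Real.volume_real_Icc_of_le]
          · ring
          · have : 0 ≤ κ / lam := by positivity
            linarith
      _ = _ := by
          rw [hP, hD₁, Real.mul_rpow hc0.le hs.le]
          ring
  · -- non-stationary regime: the radial frequency is at least `s / 2`
    suffices h : ‖∫ p : sphere (0 : EuclideanSpace ℝ (Fin (m + 2))) 1 × Ioi (0 : ℝ),
        F ((p.2 : ℝ) • (p.1 : EuclideanSpace ℝ (Fin (m + 2))))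
        ∂((sph (m + 2)).prod (Measure.volumeIoiPow (m + 1)))‖ ≤
          D₂ * ((lam : ℝ)⁻¹ * ((s / lam) ^ (m + 1))⁻¹) by
      nlinarith
    rw [integral_prod _ hPi]
    have hbd : ∀ ω : sphere (0 : EuclideanSpace ℝ (Fin (m + 2))) 1,
        ‖∫ r : Ioi (0 : ℝ), F ((r : ℝ) • (ω : EuclideanSpace ℝ (Fin (m + 2))))
          ∂(Measure.volumeIoiPow (m + 1))‖ ≤
        2 ^ (m + 1) * C₂ * ((lam : ℝ)⁻¹ * ((s / lam) ^ (m + 1))⁻¹) := by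
      intro ω
      rw [integral_volumeIoiPow (m + 1) (fun r => F (r • (ω : EuclideanSpace ℝ (Fin (m + 2))))),
        setIntegral_congr_fun measurableSet_Ioi
          (fun r hr => congrArg (fun z : ℂ => (r ^ (m + 1)) • z) (hFpol ω r hr))]
      set A := s + ⟪y, (ω : EuclideanSpace ℝ (Fin (m + 2)))⟫ with hA
      have hin : |⟪y, (ω : EuclideanSpace ℝ (Fin (m + 2)))⟫| ≤ s / 2 :=
        (abs_real_inner_le_norm _ _).trans (by simpa using hys)
      have hAs : s / 2 ≤ A := by linarith [(abs_le.mp hin).1]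
      have h := hrad A lam (by linarith) hlam
      set N := ‖∫ r in Ioi (0 : ℝ), (r ^ (m + 1)) •
        (Complex.exp (I * ((r * A : ℝ) : ℂ)) * ((ζt (lam * r - lam) : ℝ) : ℂ))‖ with hN
      have hN0 : 0 ≤ N := norm_nonneg _
      have hpw : (s / lam) ^ (m + 1) ≤ 2 ^ (m + 1) * (A / lam) ^ (m + 1) := by
        rw [← mul_pow]
        gcongr
        rw [← mul_div_assoc]
        gcongr
        linarith
      have h3 : (s / lam) ^ (m + 1) * N ≤ 2 ^ (m + 1) * C₂ * (lam : ℝ)⁻¹ := by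
        calc (s / lam) ^ (m + 1) * N ≤ 2 ^ (m + 1) * (A / lam) ^ (m + 1) * N := by gcongr
          _ = 2 ^ (m + 1) * ((A / lam) ^ (m + 1) * N) := by ring
          _ ≤ 2 ^ (m + 1) * (C₂ * (lam : ℝ)⁻¹) := by gcongr
          _ = _ := by ring
      rw [← mul_assoc, ← div_eq_mul_inv _ ((s / lam) ^ (m + 1)), le_div_iff₀ (by positivity)]
      linarith
    refine (norm_integral_le_of_norm_le_const (.of_forall hbd)).trans_eq ?_
    rw [hD₂]
    ring
end

section
/- Let d ≥ 2 and κ ≥ 1, and for λ ∈ ℕ define K_{κ/λ,1}(s,y) = ∫_{ℝ^d} e^{i(s|ξ| + y·ξ)} ζ̃_{κ,λ}(λξ) dξ. For every N ∈ ℕ there exists a constant C_N > 0 such that |K_{κ/λ,1}(s,y)| ≤ C_N λ^{−1} (s/λ)^{−N} for all s > 0, all y ∈ ℝ^d with |y| ≤ s/2, and all λ ∈ ℕ with λ ≥ κ + 1. -/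
/-!
In polar coordinates `ξ = rω` the phase is `r (s + y·ω)`, which is linear in `r` with slope
`a = s + y·ω ≥ s/2`. Substituting `r = 1 + u/λ`, the radial integral becomes
`λ⁻¹ e^{ia} ∫ e^{iu a/λ} (1 + u/λ)^{d-1} ζ̃(u) du`. The binomial theorem turns this into a
combination, with coefficients bounded since `λ ≥ 1`, of the Fourier transforms at frequency `a/λ`
of the fixed test functions `u ↦ u^k ζ̃(u)`. These decay faster than any power of `a/λ`, uniformly
in the direction `ω`, and the sphere has finite measure.

The three ingredients are `oscillatory_decay` (Fourier decay of a test function),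
`radial_decay` (the radial integral) and `norm_integral_le_of_radial` (polar coordinates).
-/

open MeasureTheory Complex
open scoped RealInnerProductSpace ENNReal

open FourierTransform in
/-- Rapid decay of `τ ↦ ∫ e^{iτu} f(u) du` for a test function `f`: up to the change of variable
`τ = -2πw` this is the Fourier transform of a Schwartz function. -/
theorem oscillatory_decay {f : ℝ → ℂ} (hf : ContDiff ℝ (⊤ : ℕ∞) f) (hc : HasCompactSupport f)
    (N : ℕ) : ∃ C > 0, ∀ τ : ℝ,
      |τ| ^ N * ‖∫ u : ℝ, Complex.exp (Complex.I * ((τ * u : ℝ) : ℂ)) * f u‖ ≤ C := by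
  obtain ⟨C, hC0, hC⟩ := (𝓕 (hc.toSchwartzMap hf)).decay N 0
  refine ⟨(2 * Real.pi) ^ N * C, by positivity, fun τ => ?_⟩
  have h := hC (-(τ / (2 * Real.pi)))
  have hint : ∫ u : ℝ, Complex.exp (Complex.I * ((τ * u : ℝ) : ℂ)) * f u
      = (𝓕 (hc.toSchwartzMap hf)) (-(τ / (2 * Real.pi))) := by
    rw [SchwartzMap.fourier_coe, Real.fourier_real_eq_integral_exp_smul]
    refine integral_congr_ae (.of_forall fun u => ?_)
    simp only [HasCompactSupport.toSchwartzMap_toFun, smul_eq_mul]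
    congr 2
    rw [mul_comm]
    congr 2
    field_simp
  rw [norm_iteratedFDeriv_zero, ← hint] at h
  have hpi : |τ| = 2 * Real.pi * ‖-(τ / (2 * Real.pi))‖ := by
    rw [norm_neg, norm_div, Real.norm_eq_abs, Real.norm_of_nonneg (by positivity)]
    field_simp
  rw [hpi, mul_pow, mul_assoc]
  gcongr

/-- The radial integral, after the substitution `r = 1 + u / lam`. The cutoff vanishes for `r ≤ 0`
because `lam > κ`, so the integral extends to the whole line. -/
theorem radial_integral_eq {κ : ℝ} (hκ : 1 ≤ κ) {ζt : ℝ → ℝ}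
    (hζ_zero : ∀ s : ℝ, κ < |s| → ζt s = 0) (n : ℕ) {lam : ℝ} (hlam : κ + 1 ≤ lam) (a : ℝ) :
    ∫ r in Set.Ioi (0 : ℝ), r ^ n •
        (Complex.exp (Complex.I * ((r * a : ℝ) : ℂ)) * ((ζt (lam * r - lam) : ℝ) : ℂ))
      = (lam⁻¹ : ℝ) • (Complex.exp (Complex.I * a) * ∫ u : ℝ, (1 + u / lam) ^ n •
        (Complex.exp (Complex.I * ((a / lam * u : ℝ) : ℂ)) * (ζt u : ℂ))) := by
  have hl : 0 < lam := by linarith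
  rw [setIntegral_eq_integral_of_forall_compl_eq_zero]
  · have h1 := Measure.integral_comp_mul_left
      (fun v : ℝ => (v / lam) ^ n •
        (Complex.exp (Complex.I * ((v / lam * a : ℝ) : ℂ)) * ((ζt (v - lam) : ℝ) : ℂ))) lam
    simp only [mul_div_cancel_left₀ _ hl.ne'] at h1
    rw [h1, abs_of_pos (inv_pos.2 hl), ← integral_add_right_eq_self _ lam,
      ← integral_const_mul]
    congr 1
    refine integral_congr_ae (.of_forall fun u => ?_)
    have e1 : (u + lam) / lam = 1 + u / lam := by field_simp; ring
    have e2 : Complex.exp (Complex.I * (((1 + u / lam) * a : ℝ) : ℂ))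
        = Complex.exp (Complex.I * a) * Complex.exp (Complex.I * ((a / lam * u : ℝ) : ℂ)) := by
      rw [← Complex.exp_add]
      congr 1
      push_cast
      ring
    simp only [e1, add_sub_cancel_right]
    rw [e2, mul_smul_comm, mul_assoc]
  · intro r hr
    have hr' : r ≤ 0 := by simpa using hr
    have : ζt (lam * r - lam) = 0 := by
      apply hζ_zero
      rw [abs_of_nonpos (by nlinarith)]
      nlinarith
    simp [this]

theorem radial_decay {κ : ℝ} (hκ : 1 ≤ κ) {ζt : ℝ → ℝ} (hζ_smooth : ContDiff ℝ (⊤ : ℕ∞) ζt)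
    (hζ_zero : ∀ s : ℝ, κ < |s| → ζt s = 0) (n N : ℕ) :
    ∃ C > 0, ∀ lam : ℝ, κ + 1 ≤ lam → ∀ a : ℝ,
      |a / lam| ^ N * ‖∫ r in Set.Ioi (0 : ℝ), r ^ n •
        (Complex.exp (Complex.I * ((r * a : ℝ) : ℂ)) * ((ζt (lam * r - lam) : ℝ) : ℂ))‖
        ≤ C * lam⁻¹ := by
  have hcs : ∀ m : ℕ, HasCompactSupport (fun u : ℝ => ((u ^ m * ζt u : ℝ) : ℂ)) := fun m => by
    refine HasCompactSupport.intro (isCompact_Icc (a := -κ) (b := κ)) fun u hu => ?_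
    have : ζt u = 0 := hζ_zero u (by rw [← not_le, abs_le]; simpa using hu)
    simp [this]
  have hsm : ∀ m : ℕ, ContDiff ℝ (⊤ : ℕ∞) (fun u : ℝ => ((u ^ m * ζt u : ℝ) : ℂ)) := fun m =>
    Complex.ofRealCLM.contDiff.comp ((contDiff_id.pow m).mul hζ_smooth)
  choose C hC0 hC using fun m => oscillatory_decay (hsm m) (hcs m) N
  refine ⟨∑ m ∈ Finset.range (n + 1), (n.choose m : ℝ) * C m, ?_, fun lam hlam a => ?_⟩
  · refine Finset.sum_pos (fun m hm => ?_) ⟨0, by simp⟩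
    have := Nat.choose_pos (Nat.lt_succ_iff.1 (Finset.mem_range.1 hm))
    have := hC0 m
    positivity
  have hl : 0 < lam := by linarith
  have hint : ∫ u : ℝ, (1 + u / lam) ^ n •
        (Complex.exp (Complex.I * ((a / lam * u : ℝ) : ℂ)) * (ζt u : ℂ))
      = ∑ m ∈ Finset.range (n + 1), (((n.choose m : ℝ) * (lam⁻¹) ^ m : ℝ) : ℂ) *
        ∫ u : ℝ, Complex.exp (Complex.I * ((a / lam * u : ℝ) : ℂ)) * ((u ^ m * ζt u : ℝ) : ℂ) := by
    simp_rw [← integral_const_mul]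
    rw [← integral_finsetSum]
    · refine integral_congr_ae (.of_forall fun u => ?_)
      simp only
      rw [add_comm, add_pow, Finset.sum_smul]
      refine Finset.sum_congr rfl fun m _ => ?_
      rw [Complex.real_smul]
      push_cast
      ring
    · intro m _
      refine Integrable.const_mul (Continuous.integrable_of_hasCompactSupport ?_ ?_) _
      · have := (hsm m).continuous
        fun_prop
      · exact (hcs m).mul_left
  rw [radial_integral_eq hκ hζ_zero n hlam a, norm_smul, norm_mul, mul_comm Complex.I,
    Complex.norm_exp_ofReal_mul_I, one_mul, Real.norm_of_nonneg (inv_pos.2 hl).le, mul_left_comm,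
    mul_comm _ lam⁻¹, hint]
  gcongr
  refine (mul_le_mul_of_nonneg_left (norm_sum_le _ _) (by positivity)).trans ?_
  rw [Finset.mul_sum]
  refine Finset.sum_le_sum fun m _ => ?_
  rw [norm_mul, Complex.norm_real, Real.norm_of_nonneg (by positivity), mul_left_comm]
  have h1 : lam⁻¹ ^ m ≤ 1 := pow_le_one₀ (by positivity) (inv_le_one_of_one_le₀ (by linarith))
  refine mul_le_mul ?_ (hC m _) (by positivity) (by positivity)
  exact mul_le_of_le_one_right (by positivity) h1

/-- Integration in polar coordinates: a bound for the radial integrals that is uniform over all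
directions bounds the integral over the whole space. -/
theorem norm_integral_le_of_radial {E : Type*} [NormedAddCommGroup E] [NormedSpace ℝ E]
    [MeasurableSpace E] [BorelSpace E] [FiniteDimensional ℝ E] [Nontrivial E]
    (μ : Measure E) [μ.IsAddHaarMeasure] {f : E → ℂ} (hf : Integrable f μ) {B : ℝ}
    (hB : ∀ ω : E, ‖ω‖ = 1 →
      ‖∫ r in Set.Ioi (0 : ℝ), r ^ (Module.finrank ℝ E - 1) • f (r • ω)‖ ≤ B) :
    ‖∫ x, f x ∂μ‖ ≤ B * μ.toSphere.real Set.univ := by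
  set g : Metric.sphere (0 : E) 1 × Set.Ioi (0 : ℝ) → ℂ := fun p => f (p.2.1 • p.1.1) with hg
  have hgcomp : ∀ x : ({0}ᶜ : Set E), g (homeomorphUnitSphereProd E x) = f x := fun x => by
    have hx : ‖(x : E)‖ ≠ 0 := norm_ne_zero_iff.2 x.2
    simp [hg, smul_smul, hx]
  have hmp := μ.measurePreserving_homeomorphUnitSphereProd
  have hemb := (homeomorphUnitSphereProd E).measurableEmbedding
  have h0 : MeasurableSet ({0}ᶜ : Set E) := (measurableSet_singleton _).compl
  have hgint : Integrable g (μ.toSphere.prod (.volumeIoiPow (Module.finrank ℝ E - 1))) := by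
    rw [← hmp.integrable_comp_emb hemb]
    have : g ∘ homeomorphUnitSphereProd E = f ∘ Subtype.val := funext hgcomp
    rw [this, ← integrableOn_iff_comap_subtypeVal h0]
    exact hf.integrableOn
  have hpolar : ∫ x, f x ∂μ
      = ∫ ω, ∫ r, g (ω, r) ∂(Measure.volumeIoiPow (Module.finrank ℝ E - 1)) ∂μ.toSphere := by
    rw [← integral_prod _ hgint, ← hmp.integral_comp hemb]
    simp_rw [hgcomp]
    rw [integral_subtype_comap h0 f, restrict_compl_singleton]
  rw [hpolar]
  refine norm_integral_le_of_norm_le_const (.of_forall fun ω => ?_)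
  refine le_of_eq_of_le (congrArg norm ?_) (hB ω (by simp))
  simp only [Measure.volumeIoiPow, ENNReal.ofReal, hg]
  rw [integral_withDensity_eq_integral_smul,
    integral_subtype_comap measurableSet_Ioi
      fun r : ℝ => Real.toNNReal (r ^ (Module.finrank ℝ E - 1)) • f (r • (ω : E))]
  · refine setIntegral_congr_fun measurableSet_Ioi fun r hr => ?_
    rw [NNReal.smul_def, Real.coe_toNNReal _ (pow_nonneg (le_of_lt hr) _)]
  · exact (measurable_subtype_coe.pow_const _).real_toNNReal

/-- Non-stationary phase bound on the rescaled half-wave kernel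
`K_{κ/λ,1}(s,y) = ∫ e^{i(s|ξ|+y·ξ)} ζ̃_{κ,λ}(λξ) dξ`: for every `N` one has
`|K_{κ/λ,1}(s,y)| ≤ C_N λ⁻¹ (s/λ)^{−N}` whenever `|y| ≤ s/2`, `s > 0`, `λ ≥ κ + 1`. -/
theorem halfwave_rescaled_kernel_nonstationary (d : ℕ) (hd : 2 ≤ d) (κ : ℝ) (hκ : 1 ≤ κ)
    (ζt : ℝ → ℝ) (hζ_smooth : ContDiff ℝ (⊤ : ℕ∞) ζt) (hζ_nonneg : ∀ s, 0 ≤ ζt s)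
    (hζ_one : ∀ s : ℝ, |s| ≤ 3 / 4 * κ → ζt s = 1)
    (hζ_zero : ∀ s : ℝ, κ < |s| → ζt s = 0) :
    ∀ N : ℕ, ∃ C > 0, ∀ s : ℝ, 0 < s → ∀ y : EuclideanSpace ℝ (Fin d), ‖y‖ ≤ s / 2 →
      ∀ lam : ℕ, κ + 1 ≤ (lam : ℝ) →
        ‖∫ ξ : EuclideanSpace ℝ (Fin d),
            Complex.exp (Complex.I * ((s * ‖ξ‖ + ⟪y, ξ⟫ : ℝ) : ℂ)) *
              ((ζt ((lam : ℝ) * ‖ξ‖ - lam) : ℝ) : ℂ)‖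
          ≤ C * (lam : ℝ)⁻¹ * (s / lam) ^ (-(N : ℝ)) := by
  intro N
  have : Nonempty (Fin d) := ⟨⟨0, by omega⟩⟩
  have : Nontrivial (EuclideanSpace ℝ (Fin d)) :=
    Module.nontrivial_of_finrank_pos (R := ℝ) (by simp; omega)
  obtain ⟨C, hC0, hC⟩ := radial_decay hκ hζ_smooth hζ_zero
    (Module.finrank ℝ (EuclideanSpace ℝ (Fin d)) - 1) N
  set S := (volume : Measure (EuclideanSpace ℝ (Fin d))).toSphere.real Set.univ with hS
  have hS0 : 0 ≤ S := measureReal_nonneg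
  -- The factor `2 ^ N` comes from the lower bound `s / 2` for the slope of the phase.
  refine ⟨2 ^ N * C * (S + 1), by positivity, fun s hs y hy lam hlam => ?_⟩
  have hl : (0 : ℝ) < lam := by linarith
  have hsl : 0 < s / lam := by positivity
  have hint : Integrable (fun ξ : EuclideanSpace ℝ (Fin d) =>
      Complex.exp (Complex.I * ((s * ‖ξ‖ + ⟪y, ξ⟫ : ℝ) : ℂ)) *
              ((ζt ((lam : ℝ) * ‖ξ‖ - lam) : ℝ) : ℂ)) := by
    refine Continuous.integrable_of_hasCompactSupport ?_ ?_
    · have := hζ_smooth.continuous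
      fun_prop
    · refine HasCompactSupport.intro (isCompact_closedBall 0 2) fun ξ hξ => ?_
      have hξ' : 2 < ‖ξ‖ := by simpa using hξ
      have : ζt ((lam : ℝ) * ‖ξ‖ - lam) = 0 := by
        apply hζ_zero
        rw [abs_of_nonneg (by nlinarith)]
        nlinarith
      simp [this]
  have hrad : ∀ ω : EuclideanSpace ℝ (Fin d), ‖ω‖ = 1 →
      ‖∫ r in Set.Ioi (0 : ℝ), r ^ (Module.finrank ℝ (EuclideanSpace ℝ (Fin d)) - 1) •
        (Complex.exp (Complex.I * ((s * ‖r • ω‖ + ⟪y, r • ω⟫ : ℝ) : ℂ)) *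
              ((ζt ((lam : ℝ) * ‖r • ω‖ - lam) : ℝ) : ℂ))‖
        ≤ 2 ^ N * C * (lam : ℝ)⁻¹ * ((s / lam) ^ N)⁻¹ := by
    intro ω hω
    have hyω : |⟪y, ω⟫| ≤ s / 2 := by
      have := abs_real_inner_le_norm y ω
      rw [hω, mul_one] at this
      exact this.trans hy
    have ha : s / 2 ≤ s + ⟪y, ω⟫ := by linarith [(abs_le.1 hyω).1]
    have h := hC lam hlam (s + ⟪y, ω⟫)
    have hcongr : ∫ r in Set.Ioi (0 : ℝ),
        r ^ (Module.finrank ℝ (EuclideanSpace ℝ (Fin d)) - 1) •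
        (Complex.exp (Complex.I * ((s * ‖r • ω‖ + ⟪y, r • ω⟫ : ℝ) : ℂ)) *
              ((ζt ((lam : ℝ) * ‖r • ω‖ - lam) : ℝ) : ℂ))
        = ∫ r in Set.Ioi (0 : ℝ), r ^ (Module.finrank ℝ (EuclideanSpace ℝ (Fin d)) - 1) •
        (Complex.exp (Complex.I * ((r * (s + ⟪y, ω⟫) : ℝ) : ℂ)) *
          ((ζt (lam * r - lam) : ℝ) : ℂ)) := by
      refine setIntegral_congr_fun measurableSet_Ioi fun r hr => ?_
      have hr0 : 0 < r := hr
      have e1 : ‖r • ω‖ = r := by rw [norm_smul, hω, mul_one, Real.norm_of_nonneg hr0.le]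
      have e2 : s * r + ⟪y, r • ω⟫ = r * (s + ⟪y, ω⟫) := by rw [inner_smul_right]; ring
      simp only [e1, e2]
    rw [hcongr, ← div_eq_mul_inv, le_div_iff₀ (by positivity)]
    have hlow : s / lam ≤ 2 * |(s + ⟪y, ω⟫) / lam| := by
      rw [abs_of_nonneg (div_nonneg (by linarith) hl.le), ← mul_div_assoc]
      gcongr
      linarith
    have hpow : (s / lam) ^ N ≤ 2 ^ N * |(s + ⟪y, ω⟫) / lam| ^ N := by
      rw [← mul_pow]
      gcongr
    calc _ ≤ _ * (2 ^ N * |(s + ⟪y, ω⟫) / lam| ^ N) := by gcongr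
      _ = 2 ^ N * (|(s + ⟪y, ω⟫) / lam| ^ N * _) := by rw [mul_comm, mul_assoc]
      _ ≤ 2 ^ N * (C * (lam : ℝ)⁻¹) := by gcongr
      _ = _ := by ring
  refine (norm_integral_le_of_radial volume hint hrad).trans ?_
  rw [Real.rpow_neg hsl.le, Real.rpow_natCast, ← hS]
  have hP : 0 ≤ 2 ^ N * C * (lam : ℝ)⁻¹ * ((s / lam) ^ N)⁻¹ := by positivity
  nlinarith
end

section
/- Let d ≥ 2 and c > 0. There exists a constant C > 0 such that | ∫_0^π e^{i r cos(θ)} sin^{d−2}(θ) dθ | ≤ C r^{−(d−1)/2} for all real r ≥ c. -/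
open Complex

/-!
With `n = d - 2`, the real functions `G r = ∫ cos (r cos θ + φ) sinⁿ θ dθ` (for `φ = 0` and
`φ = -π/2` these are the real and imaginary parts of the integral) satisfy the Bessel-type
equation `r (G'' + G) + (n + 1) G' = 0`: this is differentiation under the integral sign followed
by one integration by parts.

Every solution of that equation is `O(r ^ (-(n+1)/2))`, by an energy estimate rather than by
stationary phase. Put `a = (n+1)/2`. The function `w = r ^ a G` solves
`w'' + (1 - (a² - a)/r²) w = 0`, so its energy `E = w'² + w²` has `|E'| ≤ |a² - a| E / r²`. As
`1/r²` is integrable at infinity, `E` stays bounded on `[c, ∞)`: concretely `E · exp (K / r)` is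
antitone as soon as `K ≥ |a² - a|`.
-/

/-- The derivative in the parameter is again an integral of the same shape, with the phase shifted
by `π / 2` and the weight multiplied by `cos θ`. -/
lemma hasDerivAt_phase_integral (φ : ℝ) (w : ℝ → ℝ) (hw : Continuous w) (r : ℝ) :
    HasDerivAt (fun r : ℝ => ∫ θ in (0:ℝ)..Real.pi, Real.cos (r * Real.cos θ + φ) * w θ)
      (∫ θ in (0:ℝ)..Real.pi,
        Real.cos (r * Real.cos θ + (φ + Real.pi / 2)) * (Real.cos θ * w θ)) r := by
  refine (intervalIntegral.hasDerivAt_integral_of_dominated_loc_of_deriv_le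
    (F := fun (r θ : ℝ) => Real.cos (r * Real.cos θ + φ) * w θ)
    (F' := fun (r θ : ℝ) => Real.cos (r * Real.cos θ + (φ + Real.pi / 2)) * (Real.cos θ * w θ))
    (bound := fun θ => |w θ|) (s := Set.univ) Filter.univ_mem ?_ ?_ ?_ ?_ ?_ ?_).2
  · exact Filter.Eventually.of_forall fun x =>
      (by fun_prop : Continuous _).aestronglyMeasurable
  · exact (by fun_prop : Continuous _).intervalIntegrable _ _
  · exact (by fun_prop : Continuous _).aestronglyMeasurable
  · refine Filter.Eventually.of_forall fun θ _ x _ => ?_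
    rw [Real.norm_eq_abs, abs_mul, abs_mul, ← mul_assoc]
    have h := mul_le_one₀ (Real.abs_cos_le_one (x * Real.cos θ + (φ + Real.pi / 2)))
      (abs_nonneg _) (Real.abs_cos_le_one θ)
    exact mul_le_of_le_one_left (abs_nonneg _) h
  · exact hw.abs.intervalIntegrable _ _
  · refine Filter.Eventually.of_forall fun θ _ x _ => ?_
    have h := (((((hasDerivAt_id x).mul_const (Real.cos θ)).add_const φ).cos).mul_const (w θ))
    refine h.congr_deriv ?_
    rw [← add_assoc, Real.cos_add_pi_div_two]
    simp only [id]
    ring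

/-- Integration by parts: the boundary terms of `sin^(n+1) θ · sin (r cos θ + φ)` vanish. -/
lemma phase_integral_by_parts (φ : ℝ) (n : ℕ) (r : ℝ) :
    ∫ θ in (0:ℝ)..Real.pi, (((n : ℝ) + 1) * (Real.sin (r * Real.cos θ + φ)
        * (Real.cos θ * Real.sin θ ^ n))
      - r * (Real.cos (r * Real.cos θ + φ) * Real.sin θ ^ (n + 2))) = 0 := by
  have h := intervalIntegral.integral_eq_sub_of_hasDerivAt (a := 0) (b := Real.pi)
    (f := fun θ => Real.sin θ ^ (n + 1) * Real.sin (r * Real.cos θ + φ))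
    (f' := fun θ => ((n : ℝ) + 1) * (Real.sin (r * Real.cos θ + φ)
        * (Real.cos θ * Real.sin θ ^ n))
      - r * (Real.cos (r * Real.cos θ + φ) * Real.sin θ ^ (n + 2)))
    (fun θ _ => by
      have h1 := ((Real.hasDerivAt_sin θ).pow (n + 1)).mul
        ((((Real.hasDerivAt_cos θ).const_mul r).add_const φ).sin)
      refine h1.congr_deriv ?_
      simp only [Nat.add_sub_cancel, Pi.pow_apply]
      push_cast
      ring)
    ((by fun_prop : Continuous _).intervalIntegrable _ _)
  rw [h]
  simp

/-- Energy estimate for solutions `G` (with `G1 = G'`, `G2 = G''`) of the Bessel-type equation. -/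
lemma bessel_energy_bound (n : ℕ) (c : ℝ) (hc : 0 < c) (G G1 G2 : ℝ → ℝ)
    (h1 : ∀ r, HasDerivAt G (G1 r) r) (h2 : ∀ r, HasDerivAt G1 (G2 r) r)
    (ode : ∀ r, r * (G2 r + G r) + ((n : ℝ) + 1) * G1 r = 0) :
    ∃ M : ℝ, 0 ≤ M ∧ ∀ r, c ≤ r → r ^ (n + 1) * G r ^ 2 ≤ M := by
  obtain ⟨a, ha⟩ : ∃ a : ℝ, a = ((n : ℝ) + 1) / 2 := ⟨_, rfl⟩
  have ha0 : 0 ≤ a := by rw [ha]; positivity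
  obtain ⟨K, hK⟩ : ∃ K : ℝ, K = a ^ 2 + a := ⟨_, rfl⟩
  have hK0 : 0 ≤ K := by rw [hK]; positivity
  -- `h = r ^ (-a) w'`, so that `r ^ (n + 1) * (h² + G²)` is the energy `w'² + w²`.
  let h : ℝ → ℝ := fun r => G1 r + a * G r / r
  let E : ℝ → ℝ := fun r => r ^ (n + 1) * (h r ^ 2 + G r ^ 2)
  have hE : ∀ r, 0 < r →
      HasDerivAt E (r ^ (n + 1) * (2 * (a ^ 2 - a) * (h r * G r) / r ^ 2)) r := by
    intro r hr
    have hne := hr.ne'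
    have dh : HasDerivAt h (G2 r + (a * G1 r * r - a * G r * 1) / r ^ 2) r :=
      (h2 r).add (((h1 r).const_mul a).div (hasDerivAt_id r) hne)
    have dE := ((hasDerivAt_id r).pow (n + 1)).mul ((dh.pow 2).add ((h1 r).pow 2))
    refine dE.congr_deriv ?_
    have hG2 : G2 r = -G r - 2 * a * G1 r / r := by
      have := ode r
      rw [ha]; field_simp; linarith
    have hn : (n : ℝ) = 2 * a - 1 := by rw [ha]; ring
    simp only [Nat.add_sub_cancel, Pi.pow_apply, Pi.add_apply, id, hG2, h]
    push_cast
    rw [hn]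
    field_simp
    ring
  have hP : ∀ r, 0 < r → HasDerivAt (fun r => E r * Real.exp (K / r))
      (r ^ (n + 1) * Real.exp (K / r) / r ^ 2
        * (2 * (a ^ 2 - a) * (h r * G r) - K * (h r ^ 2 + G r ^ 2))) r := by
    intro r hr
    have hne := hr.ne'
    have d2 := (((hasDerivAt_const r K).div (hasDerivAt_id r) hne).exp)
    refine ((hE r hr).mul d2).congr_deriv ?_
    simp only [E, id, Pi.div_apply]
    field_simp
    ring
  have anti : AntitoneOn (fun r => E r * Real.exp (K / r)) (Set.Ici c) := by
    refine antitoneOn_of_hasDerivWithinAt_nonpos (convex_Ici c)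
      (fun r hr => (hP r (hc.trans_le hr)).continuousAt.continuousWithinAt)
      (fun r hr => (hP r (hc.trans_le (interior_subset hr))).hasDerivWithinAt) ?_
    intro r hr
    have hr0 : 0 < r := hc.trans_le (interior_subset hr)
    refine mul_nonpos_of_nonneg_of_nonpos (by positivity) ?_
    rw [hK]
    nlinarith [mul_nonneg (sq_nonneg a) (sq_nonneg (h r - G r)),
      mul_nonneg ha0 (sq_nonneg (h r + G r))]
  refine ⟨E c * Real.exp (K / c), by positivity, fun r hr => ?_⟩
  have hr0 : 0 < r := hc.trans_le hr
  have hle : E r * Real.exp (K / r) ≤ E c * Real.exp (K / c) :=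
    anti (Set.mem_Ici.2 le_rfl) hr hr
  have hexp : 1 ≤ Real.exp (K / r) := Real.one_le_exp (by positivity)
  calc r ^ (n + 1) * G r ^ 2 ≤ E r :=
        mul_le_mul_of_nonneg_left (le_add_of_nonneg_left (sq_nonneg _)) (by positivity)
    _ ≤ E r * Real.exp (K / r) := le_mul_of_one_le_right (by positivity) hexp
    _ ≤ _ := hle

lemma phase_integral_bound (φ : ℝ) (n : ℕ) (c : ℝ) (hc : 0 < c) :
    ∃ M : ℝ, 0 ≤ M ∧ ∀ r, c ≤ r → r ^ (n + 1) *
      (∫ θ in (0:ℝ)..Real.pi, Real.cos (r * Real.cos θ + φ) * Real.sin θ ^ n) ^ 2 ≤ M := by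
  refine bessel_energy_bound n c hc _ _ _
    (fun r => hasDerivAt_phase_integral φ (fun θ => Real.sin θ ^ n) (by fun_prop) r)
    (fun r => hasDerivAt_phase_integral (φ + Real.pi / 2)
      (fun θ => Real.cos θ * Real.sin θ ^ n) (by fun_prop) r) ?_
  intro r
  rw [← intervalIntegral.integral_add ((by fun_prop : Continuous _).intervalIntegrable _ _)
    ((by fun_prop : Continuous _).intervalIntegrable _ _),
    ← intervalIntegral.integral_const_mul, ← intervalIntegral.integral_const_mul,
    ← intervalIntegral.integral_add ((by fun_prop : Continuous _).intervalIntegrable _ _)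
    ((by fun_prop : Continuous _).intervalIntegrable _ _), ← neg_eq_zero,
    ← intervalIntegral.integral_neg]
  refine Eq.trans (intervalIntegral.integral_congr fun θ _ => ?_) (phase_integral_by_parts φ n r)
  simp only [← add_assoc, Real.cos_add_pi_div_two, Real.sin_add_pi_div_two]
  have h := Real.sin_sq_add_cos_sq θ
  linear_combination (r * Real.cos (r * Real.cos θ + φ) * Real.sin θ ^ n) * h

/-- Stationary-phase decay of the oscillatory integral
`∫_0^π e^{i r cos θ} sin^{d−2}(θ) dθ` for `r ≥ c`. -/
theorem oscillatory_sphere_integral_decay (d : ℕ) (hd : 2 ≤ d) (c : ℝ) (hc : 0 < c) :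
    ∃ C > 0, ∀ r : ℝ, c ≤ r →
      ‖∫ θ in (0:ℝ)..Real.pi,
          Complex.exp (Complex.I * r * Real.cos θ) * ((Real.sin θ ^ (d - 2) : ℝ) : ℂ)‖
        ≤ C * r ^ (-((d : ℝ) - 1) / 2) := by
  obtain ⟨n, rfl⟩ := Nat.exists_eq_add_of_le' hd
  simp only [Nat.add_sub_cancel]
  obtain ⟨M, hM, hMb⟩ := phase_integral_bound 0 n c hc
  obtain ⟨N, hN, hNb⟩ := phase_integral_bound (-(Real.pi / 2)) n c hc
  refine ⟨√M + √N + 1, by positivity, fun r hr => ?_⟩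
  have hr0 : 0 < r := hc.trans_le hr
  have split : (∫ θ in (0:ℝ)..Real.pi,
      Complex.exp (Complex.I * r * Real.cos θ) * ((Real.sin θ ^ n : ℝ) : ℂ)) =
      ((∫ θ in (0:ℝ)..Real.pi, Real.cos (r * Real.cos θ + 0) * Real.sin θ ^ n : ℝ) : ℂ) +
      ((∫ θ in (0:ℝ)..Real.pi,
        Real.cos (r * Real.cos θ + -(Real.pi / 2)) * Real.sin θ ^ n : ℝ) : ℂ) * Complex.I := by
    rw [← intervalIntegral.integral_ofReal, ← intervalIntegral.integral_ofReal,
      ← intervalIntegral.integral_mul_const,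
      ← intervalIntegral.integral_add ((by fun_prop : Continuous _).intervalIntegrable _ _)
        ((by fun_prop : Continuous _).intervalIntegrable _ _)]
    refine intervalIntegral.integral_congr fun θ _ => ?_
    have e : Complex.I * r * Real.cos θ = ((r * Real.cos θ : ℝ) : ℂ) * Complex.I := by
      push_cast; ring
    simp only [e, Complex.exp_mul_I, ← sub_eq_add_neg, Real.cos_sub_pi_div_two, add_zero]
    push_cast
    ring
  have key : ∀ X B : ℝ, r ^ (n + 1) * X ^ 2 ≤ B →
      |X| ≤ √B * r ^ (-(((n + 2 : ℕ) : ℝ) - 1) / 2) := by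
    intro X B hB
    have hp : r ^ (-(((n + 2 : ℕ) : ℝ) - 1) / 2) = (√(r ^ (n + 1)))⁻¹ := by
      rw [Real.sqrt_eq_rpow, ← Real.rpow_natCast, ← Real.rpow_mul hr0.le, ← Real.rpow_neg hr0.le]
      congr 1
      push_cast
      ring
    rw [hp, ← div_eq_mul_inv, le_div_iff₀ (by positivity), ← Real.sqrt_sq_eq_abs, mul_comm,
      ← Real.sqrt_mul (by positivity)]
    exact Real.sqrt_le_sqrt hB
  rw [split]
  refine (norm_add_le _ _).trans ?_
  rw [norm_mul, Complex.norm_I, mul_one, Complex.norm_real, Complex.norm_real,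
    Real.norm_eq_abs, Real.norm_eq_abs]
  have h1 := key _ _ (hMb r hr)
  have h2 := key _ _ (hNb r hr)
  have h3 : 0 ≤ r ^ (-(((n + 2 : ℕ) : ℝ) - 1) / 2) := by positivity
  linarith
end
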